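/- arXiv:1501.02212 — 6 statements merged into one kernel-verified Lean document; each statement's English description precedes it below -/
import Mathlib

section
/- Let X, Y be natural numbers with Y ≥ 1 and let n = size(Y). Then the n-fold iterate of the Loop-I step h applied to the pair (2X+1, Y) equals (E(X,Y), 0); that is, h^[n](2X+1, Y) = (4^n·(2X+1) + Σ_{i<n} 2·4^{n-1-i}·bit_i(Y), 0). -/
/-- The i-th binary digit of `Y` (least significant has index 0). -/
def bit (Y i : ℕ) : ℕ := Y / 2 ^ i % 2

/-- The Loop-I encoding `E(X,Y)`. -/
def E (X Y : ℕ) : ℕ :=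
  4 ^ Nat.size Y * (2 * X + 1) +
    ∑ i ∈ Finset.range (Nat.size Y), 2 * 4 ^ (Nat.size Y - 1 - i) * bit Y i

/-- The Loop-I step. -/
def h : ℕ × ℕ → ℕ × ℕ := fun p => (4 * p.1 + 2 * (p.2 % 2), p.2 / 2)

theorem h_iterate (a Y m : ℕ) :
    h^[m] (a, Y) =
      (4 ^ m * a + ∑ i ∈ Finset.range m, 2 * 4 ^ (m - 1 - i) * bit Y i, Y / 2 ^ m) := by
  induction m with
  | zero => simp
  | succ m ih =>
    rw [Function.iterate_succ_apply', ih]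
    have key : ∑ i ∈ Finset.range m, 2 * 4 ^ (m + 1 - 1 - i) * bit Y i =
        4 * ∑ i ∈ Finset.range m, 2 * 4 ^ (m - 1 - i) * bit Y i := by
      rw [Finset.mul_sum]
      refine Finset.sum_congr rfl fun i hi => ?_
      have hlt := Finset.mem_range.mp hi
      have e : m + 1 - 1 - i = (m - 1 - i) + 1 := by omega
      rw [e, pow_succ]
      ring
    rw [Finset.sum_range_succ, key]
    simp only [h, Prod.mk.injEq]
    constructor
    · simp [bit]
      ring
    · rw [Nat.div_div_eq_div_mul, pow_succ]

theorem loopI_correct (X Y : ℕ) (hY : 1 ≤ Y) :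
    h^[Nat.size Y] (2 * X + 1, Y) = (E X Y, 0) := by
  rw [h_iterate, Nat.div_eq_of_lt (Nat.lt_size_self Y)]
  rfl
end

section
/- Let X, Y be natural numbers with Y ≥ 1. Then E(X,Y) ≡ 2 (mod 4); in particular E(X,Y) is even and E(X,Y)+1 is odd. -/
theorem E_mod_four (X Y : ℕ) (hY : 1 ≤ Y) :
    E X Y % 4 = 2 ∧ Even (E X Y) ∧ Odd (E X Y + 1) := by
  have key : E X Y % 4 = 2 := by
    obtain ⟨m, hm⟩ : ∃ m, Nat.size Y = m + 1 :=
      Nat.exists_eq_succ_of_ne_zero (Nat.size_pos.2 hY).ne'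
    have h1 : 2 ^ m ≤ Y := Nat.lt_size.1 (by omega)
    have h2 : Y < 2 ^ (m + 1) := Nat.size_le.1 (by omega)
    have hb : bit Y m = 1 := by
      have h3 : Y / 2 ^ m = 1 := by
        apply Nat.div_eq_of_lt_le
        · omega
        · rw [pow_succ] at h2
          omega
      simp [bit, h3]
    have hd : 4 ∣ ∑ i ∈ Finset.range m, 2 * 4 ^ (m + 1 - 1 - i) * bit Y i := by
      apply Finset.dvd_sum
      intro i hi
      have hi' := Finset.mem_range.1 hi
      exact Dvd.dvd.mul_right (Dvd.dvd.mul_left (dvd_pow_self 4 (by omega)) 2) _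
    have hd2 : 4 ∣ 4 ^ (m + 1) * (2 * X + 1) :=
      Dvd.dvd.mul_right (dvd_pow_self 4 (by omega)) _
    have h0 : m + 1 - 1 - m = 0 := by omega
    unfold E
    rw [hm, Finset.sum_range_succ, hb, h0]
    omega
  refine ⟨key, ?_, ?_⟩
  · rw [Nat.even_iff]
    omega
  · rw [Nat.odd_iff]
    omega
end

section
/- Let X, Y be natural numbers with Y ≥ 1 and n = size(Y). Then for every i < n the floor quotient E(X,Y) / 4^i is even, and E(X,Y) / 4^n = 2X + 1. (Hence the loop 'while even(B) do B := B div 4' started from B = E(X,Y) executes exactly n iterations and terminates with B = 2X+1.) -/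
/-- Horner form of the Loop-I encoding after `n` groups. -/
def hornerG (X Y : ℕ) : ℕ → ℕ
  | 0 => 2 * X + 1
  | n + 1 => 4 * hornerG X Y n + 2 * bit Y n

theorem hornerG_eq (X Y n : ℕ) :
    4 ^ n * (2 * X + 1) + ∑ i ∈ Finset.range n, 2 * 4 ^ (n - 1 - i) * bit Y i
      = hornerG X Y n := by
  induction n with
  | zero => simp [hornerG]
  | succ n ih =>
    have h : ∑ i ∈ Finset.range n, 2 * 4 ^ (n + 1 - 1 - i) * bit Y i
        = 4 * ∑ i ∈ Finset.range n, 2 * 4 ^ (n - 1 - i) * bit Y i := by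
      rw [Finset.mul_sum]
      refine Finset.sum_congr rfl fun i hi => ?_
      have hi' := Finset.mem_range.mp hi
      rw [show n + 1 - 1 - i = (n - 1 - i) + 1 by omega, pow_succ]
      ring
    rw [Finset.sum_range_succ, h, hornerG, ← ih]
    simp
    ring

theorem hornerG_div (X Y n i : ℕ) : hornerG X Y (n + i) / 4 ^ i = hornerG X Y n := by
  induction i with
  | zero => simp
  | succ i ih =>
    rw [pow_succ', ← Nat.div_div_eq_div_mul, ← add_assoc, hornerG]
    have hb : bit Y (n + i) < 2 := Nat.mod_lt _ (by norm_num)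
    rw [show (4 * hornerG X Y (n + i) + 2 * bit Y (n + i)) / 4 = hornerG X Y (n + i) by omega, ih]

theorem loopII_correct (X Y : ℕ) (hY : 1 ≤ Y) :
    (∀ i < Nat.size Y, Even (E X Y / 4 ^ i)) ∧
      E X Y / 4 ^ Nat.size Y = 2 * X + 1 := by
  have hE : E X Y = hornerG X Y (Nat.size Y) := hornerG_eq X Y _
  rw [hE]
  constructor
  · intro i hi
    obtain ⟨k, hk⟩ : ∃ k, Nat.size Y = (k + 1) + i := ⟨Nat.size Y - i - 1, by omega⟩
    rw [hk, hornerG_div, hornerG]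
    exact ⟨2 * hornerG X Y k + bit Y k, by ring⟩
  · have h := hornerG_div X Y 0 (Nat.size Y)
    rw [zero_add] at h
    rw [h, hornerG]
end

section
/- Let X, Y be natural numbers with Y ≥ 1 and n = size(Y). Then for every t ≤ n, the t-fold iterate of the Loop-IV step g satisfies g^[t](E(X,Y), 2^{3n+1}·X) = ( 4^{n-t}·(2X+1) + Σ_{i<n-t} 2·4^{n-t-1-i}·bit_i(Y) + Σ_{s<t} bit_{n-1-s}(Y)·2^{3n-s-2t}·X , 2^{3(n-t)+1}·X ). -/
/-- The Loop-IV step. -/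
def g : ℕ × ℕ → ℕ × ℕ := fun p =>
  let a' := p.1 / 2
  let a'' := if Odd a' then a' + p.2 / 4 else a'
  (a'' / 2, p.2 / 8)

theorem g_step (A c B : ℕ) (hc : c = 0 ∨ c = 1) :
    g (4 * A + 2 * c, 8 * (2 * B)) = (A + c * (2 * B), 2 * B) := by
  rcases hc with rfl | rfl
  · have h1 : (4 * A + 2 * 0) / 2 = 2 * A := by omega
    have h2 : ¬ Odd (2 * A) := by simp
    simp only [g, h1, h2, if_false, Prod.mk.injEq]
    omega
  · have h1 : (4 * A + 2 * 1) / 2 = 2 * A + 1 := by omega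
    have h2 : Odd (2 * A + 1) := ⟨A, rfl⟩
    simp only [g, h1, h2, if_true, Prod.mk.injEq]
    omega

theorem loopIV_aux (X n : ℕ) (b : ℕ → ℕ) (hb : ∀ i, b i = 0 ∨ b i = 1) (t : ℕ) (ht : t ≤ n) :
    g^[t] (4 ^ n * (2 * X + 1) + ∑ i ∈ Finset.range n, 2 * 4 ^ (n - 1 - i) * b i,
        2 ^ (3 * n + 1) * X) =
      (4 ^ (n - t) * (2 * X + 1) +
        (∑ i ∈ Finset.range (n - t), 2 * 4 ^ (n - t - 1 - i) * b i) +
        ∑ s ∈ Finset.range t, b (n - 1 - s) * 2 ^ (3 * n - s - 2 * t) * X,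
       2 ^ (3 * (n - t) + 1) * X) := by
  induction t with
  | zero => simp
  | succ t ih =>
    obtain ⟨m, rfl⟩ : ∃ m, n = t + 1 + m := ⟨n - (t + 1), by omega⟩
    rw [Function.iterate_succ_apply', ih (by omega)]
    have e1 : t + 1 + m - t = m + 1 := by omega
    have e2 : t + 1 + m - (t + 1) = m := by omega
    rw [e1, e2, Finset.sum_range_succ, Finset.sum_range_succ]
    have s1 : ∑ i ∈ Finset.range m, 2 * 4 ^ (m + 1 - 1 - i) * b i
        = 4 * ∑ i ∈ Finset.range m, 2 * 4 ^ (m - 1 - i) * b i := by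
      rw [Finset.mul_sum]
      refine Finset.sum_congr rfl fun i hi => ?_
      have := Finset.mem_range.mp hi
      rw [show m + 1 - 1 - i = (m - 1 - i) + 1 by omega, pow_succ]
      ring
    have s2 : ∑ s ∈ Finset.range t,
          b (t + 1 + m - 1 - s) * 2 ^ (3 * (t + 1 + m) - s - 2 * t) * X
        = 4 * ∑ s ∈ Finset.range t,
          b (t + 1 + m - 1 - s) * 2 ^ (3 * (t + 1 + m) - s - 2 * (t + 1)) * X := by
      rw [Finset.mul_sum]
      refine Finset.sum_congr rfl fun i hi => ?_
      have := Finset.mem_range.mp hi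
      rw [show 3 * (t + 1 + m) - i - 2 * t
        = (3 * (t + 1 + m) - i - 2 * (t + 1)) + 2 by omega, pow_add]
      ring
    rw [s1, s2, show t + 1 + m - 1 - t = m by omega,
      show 3 * (t + 1 + m) - t - 2 * (t + 1) = 3 * m + 1 by omega,
      show m + 1 - 1 - m = 0 by omega]
    have key := g_step (4 ^ m * (2 * X + 1) +
        (∑ i ∈ Finset.range m, 2 * 4 ^ (m - 1 - i) * b i) +
        ∑ s ∈ Finset.range t,
          b (t + 1 + m - 1 - s) * 2 ^ (3 * (t + 1 + m) - s - 2 * (t + 1)) * X)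
      (b m) (2 ^ (3 * m) * X) (hb m)
    convert key using 2
    · congr 1 <;> ring
    · ring
    · ring

theorem loopIV_invariant (X Y : ℕ) (hY : 1 ≤ Y) (t : ℕ) (ht : t ≤ Nat.size Y) :
    g^[t] (E X Y, 2 ^ (3 * Nat.size Y + 1) * X) =
      (4 ^ (Nat.size Y - t) * (2 * X + 1) +
        (∑ i ∈ Finset.range (Nat.size Y - t),
          2 * 4 ^ (Nat.size Y - t - 1 - i) * bit Y i) +
        ∑ s ∈ Finset.range t,
          bit Y (Nat.size Y - 1 - s) * 2 ^ (3 * Nat.size Y - s - 2 * t) * X,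
       2 ^ (3 * (Nat.size Y - t) + 1) * X) := by
  exact loopIV_aux X (Nat.size Y) (bit Y) (fun i => Nat.mod_two_eq_zero_or_one _) t ht
end

section
/- Let X, Y be natural numbers with Y ≥ 1 and n = size(Y). For every t < n the first component of g^[t](E(X,Y), 2^{3n+1}·X) is even, and the first component of g^[n](E(X,Y), 2^{3n+1}·X) is odd. (Hence the loop 'while even(A)' of Loop IV executes exactly n iterations.) -/
/-- The digit part of the encoding, built recursively. -/
def digitSum (Y : ℕ) : ℕ → ℕ
  | 0 => 0
  | m + 1 => 4 * digitSum Y m + 2 * bit Y m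

theorem digitSum_eq (Y m : ℕ) :
    ∑ i ∈ Finset.range m, 2 * 4 ^ (m - 1 - i) * bit Y i = digitSum Y m := by
  induction m with
  | zero => rfl
  | succ m ih =>
    rw [Finset.sum_range_succ, digitSum, ← ih, Finset.mul_sum]
    congr 1
    · apply Finset.sum_congr rfl
      intro i hi
      have hi' := Finset.mem_range.1 hi
      have h : m + 1 - 1 - i = (m - 1 - i) + 1 := by omega
      rw [h, pow_succ]; ring
    · simp

theorem g_step_s4 (X Y m k : ℕ) :
    ∃ k', g (4 ^ (m + 1) * (2 * k + 1) + digitSum Y (m + 1), 2 ^ (3 * (m + 1) + 1) * X) =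
      (4 ^ m * (2 * k' + 1) + digitSum Y m, 2 ^ (3 * m + 1) * X) := by
  have hb : 2 ^ (3 * (m + 1) + 1) * X = 8 * (2 ^ (3 * m + 1) * X) := by
    rw [show 3 * (m + 1) + 1 = (3 * m + 1) + 3 by ring, pow_add]; ring
  have hQ : 2 ^ (3 * m + 1) * X = 2 * (4 ^ m * (2 ^ m * X)) := by
    rw [show (4 : ℕ) = 2 ^ 2 by norm_num, ← pow_mul,
      show 3 * m + 1 = 2 * m + m + 1 by ring, pow_add, pow_add]; ring
  have ha : 4 ^ (m + 1) * (2 * k + 1) = 4 * (4 ^ m * (2 * k + 1)) := by ring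
  have hc : bit Y m = 0 ∨ bit Y m = 1 := by unfold bit; omega
  rw [hb, ha, digitSum]
  rcases hc with hc | hc
  · refine ⟨k, ?_⟩
    rw [hc]
    generalize 4 ^ m * (2 * k + 1) = P
    generalize 2 ^ (3 * m + 1) * X = Q
    simp only [g, Nat.odd_iff]
    rw [if_neg (by omega)]
    ext <;> simp only <;> omega
  · refine ⟨k + 2 ^ m * X, ?_⟩
    have hk : 4 ^ m * (2 * (k + 2 ^ m * X) + 1) =
        4 ^ m * (2 * k + 1) + 2 * (4 ^ m * (2 ^ m * X)) := by ring
    rw [hc, hk, hQ]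
    generalize 4 ^ m * (2 * k + 1) = P
    generalize 4 ^ m * (2 ^ m * X) = Q
    simp only [g, Nat.odd_iff]
    rw [if_pos (by omega)]
    ext <;> simp only <;> omega

theorem g_iter (X Y n t : ℕ) (ht : t ≤ n) :
    ∃ k, g^[t] (4 ^ n * (2 * X + 1) + digitSum Y n, 2 ^ (3 * n + 1) * X) =
      (4 ^ (n - t) * (2 * k + 1) + digitSum Y (n - t), 2 ^ (3 * (n - t) + 1) * X) := by
  induction t with
  | zero => exact ⟨X, rfl⟩
  | succ t ih =>
    obtain ⟨k, hk⟩ := ih (by omega)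
    rw [Function.iterate_succ_apply', hk, show n - t = (n - (t + 1)) + 1 by omega]
    exact g_step_s4 X Y _ k

theorem loopIV_iterations (X Y : ℕ) (hY : 1 ≤ Y) :
    (∀ t < Nat.size Y,
      Even (g^[t] (E X Y, 2 ^ (3 * Nat.size Y + 1) * X)).1) ∧
    Odd (g^[Nat.size Y] (E X Y, 2 ^ (3 * Nat.size Y + 1) * X)).1 := by
  rw [E, digitSum_eq]
  constructor
  · intro t ht
    obtain ⟨k, hk⟩ := g_iter X Y _ t ht.le
    rw [hk]
    obtain ⟨m, hm⟩ : ∃ m, Nat.size Y - t = m + 1 := ⟨Nat.size Y - t - 1, by omega⟩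
    rw [hm, digitSum, pow_succ]
    exact ⟨4 ^ m * 2 * (2 * k + 1) + 2 * digitSum Y m + bit Y m, by ring⟩
  · obtain ⟨k, hk⟩ := g_iter X Y _ _ (le_refl (Nat.size Y))
    rw [hk]
    exact ⟨k, by simp [digitSum]⟩
end

section
/- Let X, Y be natural numbers with Y ≥ 1 and n = size(Y). Then 2^n · (E(X,Y) + 1) ≤ 24 · (X + 1) · Y^3. (Thus the maximum value handled by the three-counter multiplication algorithm is of order X·Y^3, so the algorithm runs in time polynomial in the input values.) -/
theorem E_sum_bound (Y n : ℕ) :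
    3 * (∑ i ∈ Finset.range n, 2 * 4 ^ (n - 1 - i) * bit Y i) + 2 ≤ 2 * 4 ^ n := by
  have h1 : ∑ i ∈ Finset.range n, 2 * 4 ^ (n - 1 - i) * bit Y i
      ≤ ∑ i ∈ Finset.range n, 2 * 4 ^ (n - 1 - i) := by
    apply Finset.sum_le_sum
    intro i _
    have hb : bit Y i ≤ 1 := by unfold bit; omega
    calc 2 * 4 ^ (n - 1 - i) * bit Y i ≤ 2 * 4 ^ (n - 1 - i) * 1 := Nat.mul_le_mul_left _ hb
      _ = _ := mul_one _
  rw [Finset.sum_range_reflect (fun j => 2 * 4 ^ j) n] at h1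
  have h2 : ∀ m : ℕ, 3 * (∑ i ∈ Finset.range m, 2 * 4 ^ i) + 2 = 2 * 4 ^ m := by
    intro m
    induction m with
    | zero => simp
    | succ k ih => rw [Finset.sum_range_succ, pow_succ]; omega
  have := h2 n
  omega

theorem max_value_bound (X Y : ℕ) (hY : 1 ≤ Y) :
    2 ^ Nat.size Y * (E X Y + 1) ≤ 24 * (X + 1) * Y ^ 3 := by
  have h1 := E_sum_bound Y (Nat.size Y)
  have hE : E X Y + 1 ≤ 4 ^ Nat.size Y * (2 * X + 2) := by
    have e : 4 ^ Nat.size Y * (2 * X + 2) = 4 ^ Nat.size Y * (2 * X + 1) + 4 ^ Nat.size Y := by ring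
    have hp : 1 ≤ 4 ^ Nat.size Y := Nat.one_le_pow _ _ (by norm_num)
    unfold E
    omega
  have h2 : 2 ^ Nat.size Y ≤ 2 * Y := by
    have hs : 0 < Nat.size Y := Nat.size_pos.mpr hY
    obtain ⟨k, hk⟩ : ∃ k, Nat.size Y = k + 1 := ⟨Nat.size Y - 1, by omega⟩
    have : 2 ^ k ≤ Y := Nat.lt_size.mp (by omega)
    rw [hk, pow_succ]
    omega
  calc 2 ^ Nat.size Y * (E X Y + 1)
      ≤ 2 ^ Nat.size Y * (4 ^ Nat.size Y * (2 * X + 2)) := Nat.mul_le_mul_left _ hE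
    _ = (2 ^ Nat.size Y) ^ 3 * (2 * X + 2) := by
        rw [show (4 : ℕ) = 2 ^ 2 by norm_num, ← pow_mul]
        ring
    _ ≤ (2 * Y) ^ 3 * (2 * X + 2) := Nat.mul_le_mul_right _ (Nat.pow_le_pow_left h2 3)
    _ = 16 * ((X + 1) * Y ^ 3) := by ring
    _ ≤ 24 * ((X + 1) * Y ^ 3) := Nat.mul_le_mul_right _ (by norm_num)
    _ = _ := by ring
end
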